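/- Let F : S → G(S) be a Markov chain on a measurable space S and let A, B ⊆ S be measurable. There exists a distribution-valued Streett supermartingale for (F, A, B) if and only if ℙ_{s₀}[Streett(A,B)] = 1 for every initial state s₀ ∈ S. -/

import Mathlib

open MeasureTheory ProbabilityTheory Set
open scoped ENNReal NNReal

variable {S : Type*} [MeasurableSpace S]

/-- Prepend an initial state to a trace. -/
def prep (s₀ : S) (ω : ℕ → S) : ℕ → S := fun n => Nat.rec s₀ (fun k _ => ω k) n

/-- The Streett condition for the pair `(A, B)`: either `A` is visited only
finitely often, or `B` is visited infinitely often. -/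
def streett (A B : Set S) : Set (ℕ → S) :=
  {ω | {i : ℕ | ω i ∈ A}.Finite ∨ {i : ℕ | ω i ∈ B}.Infinite}

/-- The stochastic order on distributions over `ℕ∞`:
`ζ₁ ≤ ζ₂` iff `ζ₁([a,∞]) ≤ ζ₂([a,∞])` for all `a ∈ ℕ`. -/
def stochLE (ζ₁ ζ₂ : Measure ℕ∞) : Prop :=
  ∀ a : ℕ, ζ₁ (Ici (a : ℕ∞)) ≤ ζ₂ (Ici (a : ℕ∞))

/-- The next-time operator on distribution-valued functions:
`(𝕏 r)(s)(E) = ∫ r(s')(E) dF(s)(s')`. -/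
noncomputable def nextTimeD (F : Kernel S S) (r : S → Measure ℕ∞) : S → Measure ℕ∞ :=
  fun s => (F s : Measure S).bind r

/-- The shift `1 ⊕ ζ` of a distribution on `ℕ∞`. -/
noncomputable def shift1 (ζ : Measure ℕ∞) : Measure ℕ∞ := ζ.map (· + 1)

/-- A distribution-valued Streett supermartingale (DVSSM) for `(F, A, B)`:
a measurable family `r` of probability distributions on `ℕ∞` concentrated on `ℕ`
with `1 ⊕ (𝕏 r)(x) ≤ r(x)` on `A ∖ B` and `(𝕏 r)(x) ≤ r(x)` outside `A ∪ B`
(in the stochastic order). -/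
def IsDVSSM (F : Kernel S S) (A B : Set S) (r : S → Measure ℕ∞) : Prop :=
  Measurable r ∧ (∀ s, IsProbabilityMeasure (r s)) ∧
    (∀ s, r s {n : ℕ∞ | n < ⊤} = 1) ∧
    (∀ x ∈ A \ B, stochLE (shift1 (nextTimeD F r x)) (r x)) ∧
    (∀ x ∉ A ∪ B, stochLE (nextTimeD F r x) (r x))

/-!
The minimal candidate for `r s` is the law, under `ℙ_s`, of the number of visits to `A` made
strictly before the first visit to `B`. Prepending a state `x` to a trace adds one to this number
if `x ∈ A \ B`, and leaves it unchanged if `x ∉ A ∪ B`, so this law satisfies the two DVSSM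
conditions with equality, and it is concentrated on `ℕ` if the Streett condition holds almost
surely.

Conversely, truncating the count at horizon `N` gives the Kleene iterates of these equations,
which lie below every DVSSM `r` by induction on `N`. Letting `N → ∞`, the law of the full count
is stochastically dominated by `r s`, so the count is almost surely finite from every state and
hence, by the Markov property, after every finite prefix of a trace. A trace violating the Streett
condition visits `A` infinitely often after its last visit to `B`, so almost no trace does.
-/

open Filter Topology

/-- The trace `ω` with its first `n` states removed. -/
def dropTrace (n : ℕ) (ω : ℕ → S) : ℕ → S := fun i => ω (i + n)

/-- The times, before the horizon `N`, at which the trace `ω` is in `A` and has not yet visited `B`.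
The horizon is in `ℕ∞` so that the truncated and the full counts obey the same recursion. -/
def visitTimes (A B : Set S) (N : ℕ∞) (ω : ℕ → S) : Set ℕ :=
  {i | (i : ℕ∞) < N ∧ ω i ∈ A ∧ ∀ j ≤ i, ω j ∉ B}

/-- The number of visits of the trace `ω` to `A` before the horizon `N` and strictly before
the first visit to `B`. -/
noncomputable def visits (A B : Set S) (N : ℕ∞) (ω : ℕ → S) : ℕ∞ := (visitTimes A B N ω).encard

/-- The law `ℙ_s` of the full trace `s s₁ s₂ ⋯`, when `P s` is the law of its tail `s₁ s₂ ⋯`. -/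
noncomputable def traceLaw (P : Kernel S (ℕ → S)) : Kernel S (ℕ → S) :=
  (Kernel.id ×ₖ P).map fun p => prep p.1 p.2

/-- The law of `visits A B N` on the traces started in a given state. At `N = ⊤` it is the least
distribution-valued Streett supermartingale, at finite `N` its Kleene approximation. -/
noncomputable def visitLaw (P : Kernel S (ℕ → S)) (A B : Set S) (N : ℕ∞) : Kernel S ℕ∞ :=
  (traceLaw P).map (visits A B N)

section Traces

variable {α : Type*} {A B : Set α} {N : ℕ∞} {s : α} {ω : ℕ → α}

@[simp]
lemma prep_zero (s : α) (ω : ℕ → α) : prep s ω 0 = s := rfl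

lemma visitTimes_mono (A B : Set α) (ω : ℕ → α) : Monotone fun N => visitTimes A B N ω :=
  fun _ _ hNM _ hi => ⟨hi.1.trans_le hNM, hi.2⟩

lemma visits_mono (A B : Set α) (ω : ℕ → α) : Monotone fun N => visits A B N ω :=
  fun _ _ hNM => encard_le_encard (visitTimes_mono A B ω hNM)

@[simp]
lemma visits_zero (A B : Set α) (ω : ℕ → α) : visits A B 0 ω = 0 := by
  simp [visits, visitTimes]

lemma visits_prep_of_mem_right (hs : s ∈ B) : visits A B N (prep s ω) = 0 :=
  encard_eq_zero.2 <| eq_empty_of_forall_notMem fun i hi => hi.2.2 0 i.zero_le hs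

lemma succ_mem_visitTimes_prep (hs : s ∉ B) (i : ℕ) :
    i + 1 ∈ visitTimes A B (N + 1) (prep s ω) ↔ i ∈ visitTimes A B N ω := by
  have avoids_iff : (∀ j ≤ i + 1, prep s ω j ∉ B) ↔ ∀ j ≤ i, ω j ∉ B :=
    ⟨fun h j hj => h (j + 1) (Nat.succ_le_succ hj), fun h j hj => by
      cases j with
      | zero => exact hs
      | succ j => exact h j (Nat.le_of_succ_le_succ hj)⟩
  simp only [visitTimes, mem_ofPred_eq, avoids_iff, Nat.cast_add, Nat.cast_one,
    ENat.add_lt_add_iff_right ENat.one_ne_top]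
  rfl

lemma visits_prep_of_mem_diff (hs : s ∈ A \ B) :
    visits A B (N + 1) (prep s ω) = visits A B N ω + 1 := by
  have visitTimes_eq : visitTimes A B (N + 1) (prep s ω) =
      insert 0 (Nat.succ '' visitTimes A B N ω) := by
    ext (_ | i)
    · simpa [visitTimes] using hs
    · simp [succ_mem_visitTimes_prep hs.2]
  rw [visits, visitTimes_eq, encard_insert_of_notMem (by simp), Nat.succ_injective.encard_image,
    visits]

lemma visits_prep_of_notMem_union (hs : s ∉ A ∪ B) :
    visits A B (N + 1) (prep s ω) = visits A B N ω := by
  rw [mem_union, not_or] at hs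
  have visitTimes_eq : visitTimes A B (N + 1) (prep s ω) = Nat.succ '' visitTimes A B N ω := by
    ext (_ | i)
    · simpa [visitTimes] using fun h => absurd h hs.1
    · simp [succ_mem_visitTimes_prep hs.2]
  rw [visits, visitTimes_eq, Nat.succ_injective.encard_image, visits]

lemma natCast_le_visits_top_iff {a : ℕ} :
    (a : ℕ∞) ≤ visits A B ⊤ ω ↔ ∃ N : ℕ, (a : ℕ∞) ≤ visits A B N ω := by
  refine ⟨fun ha => ?_, fun ⟨N, hN⟩ => hN.trans (visits_mono A B ω le_top)⟩
  obtain ⟨t, ht, hta⟩ := exists_subset_encard_eq ha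
  obtain ⟨M, hM⟩ := (finite_of_encard_eq_coe hta).bddAbove
  refine ⟨M + 1, hta ▸ encard_le_encard fun i hi => ⟨?_, (ht hi).2⟩⟩
  exact_mod_cast Nat.lt_succ_of_le (hM hi)

lemma mem_streett_iff_frequently :
    ω ∈ streett A B ↔ ((∃ᶠ i in atTop, ω i ∈ A) → ∃ᶠ i in atTop, ω i ∈ B) := by
  rw [Nat.frequently_atTop_iff_infinite, Nat.frequently_atTop_iff_infinite, imp_iff_not_or,
    not_infinite]
  rfl

lemma dropTrace_mem_streett_iff (n : ℕ) : dropTrace n ω ∈ streett A B ↔ ω ∈ streett A B := by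
  have frequently_iff (C : Set α) :
      (∃ᶠ i in atTop, dropTrace n ω i ∈ C) ↔ ∃ᶠ i in atTop, ω i ∈ C := by
    conv_rhs => rw [← map_add_atTop_eq_nat n, frequently_map]
    rfl
  simp only [mem_streett_iff_frequently, frequently_iff]

lemma prep_mem_streett_iff : prep s ω ∈ streett A B ↔ ω ∈ streett A B :=
  (dropTrace_mem_streett_iff (ω := prep s ω) 1).symm

lemma visits_ne_top_of_mem_streett (hω : ω ∈ streett A B) : visits A B N ω ≠ ⊤ := by
  rw [visits, encard_ne_top_iff]
  rcases hω with finite_A | infinite_B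
  · exact finite_A.subset fun i hi => hi.2.1
  · obtain ⟨k, hk⟩ := infinite_B.nonempty
    exact (finite_lt_nat k).subset fun i hi => lt_of_not_ge fun hki => hi.2.2 k hki hk

lemma mem_streett_iff_forall_visits_dropTrace_ne_top :
    ω ∈ streett A B ↔ ∀ n, visits A B ⊤ (dropTrace n ω) ≠ ⊤ := by
  refine ⟨fun hω n => visits_ne_top_of_mem_streett ((dropTrace_mem_streett_iff n).2 hω),
    fun h => ?_⟩
  rw [mem_streett_iff_frequently]
  intro frequently_A
  by_contra not_frequently_B
  obtain ⟨n, hn⟩ := eventually_atTop.1 (not_frequently.1 not_frequently_B)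
  have visitTimes_eq : visitTimes A B ⊤ (dropTrace n ω) = {i | ω (i + n) ∈ A} := by
    ext i
    simp only [visitTimes, dropTrace, mem_ofPred_eq, ENat.natCast_lt_top, true_and,
      and_iff_left_iff_imp]
    exact fun _ j _ => hn _ (Nat.le_add_left n j)
  refine h n ?_
  rw [visits, visitTimes_eq, encard_eq_top_iff, ← Nat.frequently_atTop_iff_infinite]
  rwa [← map_add_atTop_eq_nat n, frequently_map] at frequently_A

end Traces

section Measurability

variable {A B : Set S}

lemma measurable_dropTrace (n : ℕ) : Measurable (dropTrace n : (ℕ → S) → ℕ → S) :=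
  measurable_pi_lambda _ fun i => measurable_pi_apply (i + n)

lemma measurable_uncurry_prep : Measurable fun p : S × (ℕ → S) => prep p.1 p.2 := by
  refine measurable_pi_lambda _ fun n => ?_
  cases n with
  | zero => exact measurable_fst
  | succ n => exact (measurable_pi_apply n).comp measurable_snd

lemma measurable_prep (s : S) : Measurable (prep s) :=
  measurable_uncurry_prep.comp measurable_prodMk_left

lemma measurable_visits (hA : MeasurableSet A) (hB : MeasurableSet B) (N : ℕ∞) :
    Measurable (visits A B N) := by
  refine measurable_encard.comp (measurable_set_iff.2 fun i => ?_)
  have mem_A : Measurable fun ω : ℕ → S => ω i ∈ A := hA.mem.comp (measurable_pi_apply i)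
  have notMem_B (j : ℕ) : Measurable fun ω : ℕ → S => ω j ∉ B :=
    (hB.mem.comp (measurable_pi_apply j)).not
  exact measurable_const.and (mem_A.and (.forall fun j => .forall fun _ => notMem_B j))

lemma measurableSet_visits_ne_top (hA : MeasurableSet A) (hB : MeasurableSet B) (N : ℕ∞) :
    MeasurableSet {ω | visits A B N ω ≠ ⊤} :=
  measurable_visits hA hB N (measurableSet_singleton ⊤).compl

lemma measurableSet_streett (hA : MeasurableSet A) (hB : MeasurableSet B) :
    MeasurableSet (streett A B) := by
  have streett_eq : streett A B = ⋂ n, dropTrace n ⁻¹' {ω | visits A B ⊤ ω ≠ ⊤} := by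
    ext ω
    simpa using mem_streett_iff_forall_visits_dropTrace_ne_top
  rw [streett_eq]
  exact .iInter fun n => measurable_dropTrace n (measurableSet_visits_ne_top hA hB ⊤)

end Measurability

section StochasticOrder

variable {ζ₁ ζ₂ ζ₃ : Measure ℕ∞}

lemma shift1_Ici_zero (ζ : Measure ℕ∞) : shift1 ζ (Ici 0) = ζ (Ici 0) := by
  simp [shift1, Measure.map_apply (Measurable.of_discrete (f := (· + (1 : ℕ∞)))) .of_discrete]

lemma shift1_Ici_add_one (ζ : Measure ℕ∞) (a : ℕ∞) : shift1 ζ (Ici (a + 1)) = ζ (Ici a) := by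
  rw [shift1, Measure.map_apply .of_discrete .of_discrete]
  congr 1
  ext x
  simp

lemma nextTimeD_apply (F : Kernel S S) {r : S → Measure ℕ∞} (hr : Measurable r) (s : S)
    (E : Set ℕ∞) : nextTimeD F r s E = ∫⁻ s', r s' E ∂F s :=
  Measure.bind_apply .of_discrete hr.aemeasurable

namespace stochLE

lemma of_eq (h : ζ₁ = ζ₂) : stochLE ζ₁ ζ₂ := fun _ => h ▸ le_rfl

lemma trans (h₁₂ : stochLE ζ₁ ζ₂) (h₂₃ : stochLE ζ₂ ζ₃) : stochLE ζ₁ ζ₃ :=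
  fun a => (h₁₂ a).trans (h₂₃ a)

lemma dirac_zero [IsProbabilityMeasure ζ₁] : stochLE (.dirac 0) ζ₁ := by
  rintro (_ | a) <;> simp

lemma shift1_mono (h : stochLE ζ₁ ζ₂) : stochLE (shift1 ζ₁) (shift1 ζ₂) := by
  rintro (_ | a)
  · simpa only [Nat.cast_zero, shift1_Ici_zero] using h 0
  · simpa only [Nat.cast_add, Nat.cast_one, shift1_Ici_add_one] using h a

lemma nextTimeD_mono (F : Kernel S S) {r₁ r₂ : S → Measure ℕ∞} (hr₁ : Measurable r₁)
    (hr₂ : Measurable r₂) (h : ∀ s, stochLE (r₁ s) (r₂ s)) (s : S) :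
    stochLE (nextTimeD F r₁ s) (nextTimeD F r₂ s) := fun a => by
  rw [nextTimeD_apply F hr₁, nextTimeD_apply F hr₂]
  exact lintegral_mono fun s' => h s' a

lemma apply_top_le [IsFiniteMeasure ζ₂] (h : stochLE ζ₁ ζ₂) : ζ₁ {⊤} ≤ ζ₂ {⊤} := by
  have iInter_Ici : ⋂ a : ℕ, Ici (a : ℕ∞) = {⊤} := by
    ext x
    simp [ENat.eq_top_iff_forall_ge]
  have tendsto_Ici : Tendsto (fun a : ℕ => ζ₂ (Ici (a : ℕ∞))) atTop (𝓝 (ζ₂ {⊤})) :=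
    iInter_Ici ▸ tendsto_measure_iInter_atTop (fun _ => MeasurableSet.of_discrete.nullMeasurableSet)
      (fun _ _ hab => Ici_subset_Ici.2 (Nat.cast_le.2 hab)) ⟨0, measure_ne_top _ _⟩
  exact ge_of_tendsto' tendsto_Ici fun a =>
    (measure_mono (singleton_subset_iff.2 le_top)).trans (h a)

end stochLE

end StochasticOrder

section TraceLaw

variable {F : Kernel S S} {P : Kernel S (ℕ → S)} {p : (ℕ → S) → Prop}

lemma traceLaw_apply (P : Kernel S (ℕ → S)) [IsSFiniteKernel P] (s : S) :
    traceLaw P s = (P s).map (prep s) := by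
  rw [traceLaw, Kernel.map_apply _ measurable_uncurry_prep, Kernel.prod_apply, Kernel.id_apply,
    Measure.dirac_prod, Measure.map_map measurable_uncurry_prep measurable_prodMk_left]
  rfl

lemma ae_traceLaw_iff [IsSFiniteKernel P] (hp : MeasurableSet {ω | p ω}) (s : S) :
    (∀ᵐ ω ∂traceLaw P s, p ω) ↔ ∀ᵐ ω ∂P s, p (prep s ω) := by
  rw [traceLaw_apply, ae_map_iff (measurable_prep s).aemeasurable hp]

lemma ae_of_forall_ae_traceLaw (hP : P = traceLaw P ∘ₖ F) (hp : MeasurableSet {ω | p ω})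
    (h : ∀ s, ∀ᵐ ω ∂traceLaw P s, p ω) (s : S) : ∀ᵐ ω ∂P s, p ω := by
  rw [hP]
  exact Kernel.ae_comp_of_ae_ae hp (.of_forall h)

lemma ae_dropTrace_of_forall_ae_traceLaw [IsSFiniteKernel P] (hP : P = traceLaw P ∘ₖ F)
    (hp : MeasurableSet {ω | p ω}) (h : ∀ s, ∀ᵐ ω ∂traceLaw P s, p ω) (n : ℕ) (s : S) :
    ∀ᵐ ω ∂P s, p (dropTrace n ω) := by
  induction n generalizing s with
  | zero => exact ae_of_forall_ae_traceLaw hP hp h s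
  | succ n ih =>
    have hp_drop : MeasurableSet {ω | p (dropTrace (n + 1) ω)} := measurable_dropTrace (n + 1) hp
    exact ae_of_forall_ae_traceLaw hP hp_drop (fun s' => (ae_traceLaw_iff hp_drop s').2 (ih s')) s

end TraceLaw

section VisitLaw

variable {F : Kernel S S} {P : Kernel S (ℕ → S)} {A B : Set S} {s : S}

lemma visitLaw_apply [IsSFiniteKernel P] (hA : MeasurableSet A) (hB : MeasurableSet B) (N : ℕ∞)
    (s : S) : visitLaw P A B N s = (P s).map fun ω => visits A B N (prep s ω) := by
  have hv := measurable_visits hA hB N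
  rw [visitLaw, Kernel.map_apply _ hv, traceLaw_apply, Measure.map_map hv (measurable_prep s)]
  rfl

lemma isMarkovKernel_visitLaw [IsMarkovKernel P] (hA : MeasurableSet A) (hB : MeasurableSet B)
    (N : ℕ∞) : IsMarkovKernel (visitLaw P A B N) := by
  have : IsMarkovKernel (traceLaw P) := Kernel.IsMarkovKernel.map _ measurable_uncurry_prep
  exact Kernel.IsMarkovKernel.map _ (measurable_visits hA hB N)

lemma nextTimeD_visitLaw (hP : P = traceLaw P ∘ₖ F) (hA : MeasurableSet A) (hB : MeasurableSet B)
    (N : ℕ∞) (s : S) : nextTimeD F (visitLaw P A B N) s = (P s).map (visits A B N) :=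
  calc nextTimeD F (visitLaw P A B N) s
      = ((traceLaw P ∘ₖ F).map (visits A B N)) s := by rw [Kernel.map_comp]; rfl
    _ = (P s).map (visits A B N) := by
      rw [← hP, Kernel.map_apply _ (measurable_visits hA hB N)]

lemma visitLaw_zero [IsMarkovKernel P] (hA : MeasurableSet A) (hB : MeasurableSet B) (s : S) :
    visitLaw P A B 0 s = .dirac 0 := by
  simp [visitLaw_apply hA hB]

lemma visitLaw_of_mem_right [IsMarkovKernel P] (hA : MeasurableSet A) (hB : MeasurableSet B)
    (N : ℕ∞) (hs : s ∈ B) : visitLaw P A B N s = .dirac 0 := by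
  simp [visitLaw_apply hA hB, visits_prep_of_mem_right hs]

lemma visitLaw_add_one_of_mem_diff [IsSFiniteKernel P] (hP : P = traceLaw P ∘ₖ F)
    (hA : MeasurableSet A) (hB : MeasurableSet B) (N : ℕ∞) (hs : s ∈ A \ B) :
    visitLaw P A B (N + 1) s = shift1 (nextTimeD F (visitLaw P A B N) s) := by
  simp only [visitLaw_apply hA hB (N + 1), visits_prep_of_mem_diff hs]
  rw [nextTimeD_visitLaw hP hA hB, shift1, Measure.map_map .of_discrete (measurable_visits hA hB N)]
  rfl

lemma visitLaw_add_one_of_notMem_union [IsSFiniteKernel P] (hP : P = traceLaw P ∘ₖ F)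
    (hA : MeasurableSet A) (hB : MeasurableSet B) (N : ℕ∞) (hs : s ∉ A ∪ B) :
    visitLaw P A B (N + 1) s = nextTimeD F (visitLaw P A B N) s := by
  simp only [visitLaw_apply hA hB (N + 1), visits_prep_of_notMem_union hs]
  rw [nextTimeD_visitLaw hP hA hB]

lemma visitLaw_top_Ici (hA : MeasurableSet A) (hB : MeasurableSet B) (s : S) (a : ℕ) :
    visitLaw P A B ⊤ s (Ici (a : ℕ∞)) = ⨆ N : ℕ, visitLaw P A B N s (Ici (a : ℕ∞)) := by
  have preimage_eq : visits A B ⊤ ⁻¹' Ici (a : ℕ∞) = ⋃ N : ℕ, visits A B N ⁻¹' Ici (a : ℕ∞) := by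
    ext ω
    simpa using natCast_le_visits_top_iff
  have preimage_mono : Monotone fun N : ℕ => visits A B N ⁻¹' Ici (a : ℕ∞) :=
    fun N M hNM ω hω => le_trans hω (visits_mono A B ω (Nat.cast_le.2 hNM))
  simp only [visitLaw, Kernel.map_apply' _ (measurable_visits hA hB _) _
    (MeasurableSet.of_discrete (s := Ici (a : ℕ∞)))]
  rw [preimage_eq, preimage_mono.measure_iUnion]

lemma visitLaw_natCast_stochLE [IsMarkovKernel P] (hP : P = traceLaw P ∘ₖ F)
    (hA : MeasurableSet A) (hB : MeasurableSet B) {r : S → Measure ℕ∞} (hr : IsDVSSM F A B r)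
    (N : ℕ) (s : S) : stochLE (visitLaw P A B N s) (r s) := by
  obtain ⟨measurable_r, isProbabilityMeasure_r, -, decrease_A, decrease_compl⟩ := hr
  induction N generalizing s with
  | zero =>
    rw [Nat.cast_zero, visitLaw_zero hA hB]
    exact .dirac_zero
  | succ N ih =>
    have next_le : stochLE (nextTimeD F (visitLaw P A B N) s) (nextTimeD F r s) :=
      .nextTimeD_mono F (Kernel.measurable _) measurable_r ih s
    rw [Nat.cast_add, Nat.cast_one]
    by_cases hsB : s ∈ B
    · rw [visitLaw_of_mem_right hA hB _ hsB]
      exact .dirac_zero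
    by_cases hsA : s ∈ A
    · rw [visitLaw_add_one_of_mem_diff hP hA hB _ ⟨hsA, hsB⟩]
      exact next_le.shift1_mono.trans (decrease_A s ⟨hsA, hsB⟩)
    · have hs : s ∉ A ∪ B := fun h => h.elim hsA hsB
      rw [visitLaw_add_one_of_notMem_union hP hA hB _ hs]
      exact next_le.trans (decrease_compl s hs)

lemma visitLaw_top_stochLE [IsMarkovKernel P] (hP : P = traceLaw P ∘ₖ F)
    (hA : MeasurableSet A) (hB : MeasurableSet B) {r : S → Measure ℕ∞} (hr : IsDVSSM F A B r)
    (s : S) : stochLE (visitLaw P A B ⊤ s) (r s) := fun a => by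
  rw [visitLaw_top_Ici hA hB]
  exact iSup_le fun N => visitLaw_natCast_stochLE hP hA hB hr N s a

lemma ae_visits_ne_top_of_isDVSSM [IsMarkovKernel P] (hP : P = traceLaw P ∘ₖ F)
    (hA : MeasurableSet A) (hB : MeasurableSet B) {r : S → Measure ℕ∞} (hr : IsDVSSM F A B r)
    (s : S) : ∀ᵐ ω ∂traceLaw P s, visits A B ⊤ ω ≠ ⊤ := by
  have := hr.2.1 s
  have r_top : r s {⊤} = 0 := by
    rw [← prob_compl_eq_one_iff .of_discrete, ← hr.2.2.1 s]
    congr 1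
    ext x
    simp [lt_top_iff_ne_top]
  have visitLaw_top : visitLaw P A B ⊤ s {⊤} = 0 :=
    nonpos_iff_eq_zero.1 <| (visitLaw_top_stochLE hP hA hB hr s).apply_top_le.trans r_top.le
  rw [visitLaw, Kernel.map_apply' _ (measurable_visits hA hB ⊤) _ .of_discrete] at visitLaw_top
  exact measure_eq_zero_iff_ae_notMem.1 visitLaw_top

lemma visitLaw_top_setOf_lt_top [IsMarkovKernel P] (hA : MeasurableSet A) (hB : MeasurableSet B)
    (hs : ∀ᵐ ω ∂P s, ω ∈ streett A B) : visitLaw P A B ⊤ s {n | n < ⊤} = 1 := by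
  have visits_ne_top : ∀ᵐ ω ∂traceLaw P s, visits A B ⊤ ω ≠ ⊤ := by
    rw [ae_traceLaw_iff (measurableSet_visits_ne_top hA hB ⊤)]
    filter_upwards [hs] with ω hω
    exact visits_ne_top_of_mem_streett (prep_mem_streett_iff.2 hω)
  have := isMarkovKernel_visitLaw (P := P) hA hB ⊤
  have lt_top : ∀ᵐ n ∂visitLaw P A B ⊤ s, n < ⊤ := by
    rw [visitLaw, Kernel.map_apply _ (measurable_visits hA hB ⊤),
      ae_map_iff (measurable_visits hA hB ⊤).aemeasurable .of_discrete]
    exact visits_ne_top.mono fun _ => lt_top_iff_ne_top.2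
  exact (mem_ae_iff_prob_eq_one .of_discrete).1 lt_top

lemma isDVSSM_visitLaw_top [IsMarkovKernel P] (hP : P = traceLaw P ∘ₖ F)
    (hA : MeasurableSet A) (hB : MeasurableSet B) (h : ∀ s, ∀ᵐ ω ∂P s, ω ∈ streett A B) :
    IsDVSSM F A B (visitLaw P A B ⊤) :=
  ⟨Kernel.measurable _, (isMarkovKernel_visitLaw hA hB ⊤).isProbabilityMeasure,
    fun s => visitLaw_top_setOf_lt_top hA hB (h s),
    fun _ hs => .of_eq (visitLaw_add_one_of_mem_diff hP hA hB ⊤ hs).symm,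
    fun _ hs => .of_eq (visitLaw_add_one_of_notMem_union hP hA hB ⊤ hs).symm⟩

lemma ae_mem_streett_of_isDVSSM [IsMarkovKernel P] (hP : P = traceLaw P ∘ₖ F)
    (hA : MeasurableSet A) (hB : MeasurableSet B) {r : S → Measure ℕ∞} (hr : IsDVSSM F A B r)
    (s : S) : ∀ᵐ ω ∂P s, ω ∈ streett A B := by
  have visits_drop_ne_top : ∀ᵐ ω ∂P s, ∀ n, visits A B ⊤ (dropTrace n ω) ≠ ⊤ :=
    ae_all_iff.2 fun n => ae_dropTrace_of_forall_ae_traceLaw hP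
      (measurableSet_visits_ne_top hA hB ⊤) (ae_visits_ne_top_of_isDVSSM hP hA hB hr) n s
  filter_upwards [visits_drop_ne_top] with ω hω
  exact mem_streett_iff_forall_visits_dropTrace_ne_top.2 hω

end VisitLaw

/-- There exists a distribution-valued Streett supermartingale for `(F, A, B)` iff
the Streett condition for `(A, B)` holds almost surely from every initial state. -/
theorem exists_DVSSM_iff_streett_as
    (F : Kernel S S) [IsMarkovKernel F]
    (P : Kernel S (ℕ → S)) [IsMarkovKernel P]
    (hP : ∀ s₀ : S, (P s₀ : Measure (ℕ → S)) = (F s₀).bind fun s₁ => (P s₁).map (prep s₁))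
    (A B : Set S) (hA : MeasurableSet A) (hB : MeasurableSet B) :
    (∃ r : S → Measure ℕ∞, IsDVSSM F A B r) ↔
      (∀ s₀ : S, P s₀ (streett A B) = 1) := by
  have hP' : P = traceLaw P ∘ₖ F := Kernel.ext fun s₀ => by
    simp only [Kernel.comp_apply, funext (traceLaw_apply P), ← hP s₀]
  have prob_eq_one_iff (s₀ : S) : P s₀ (streett A B) = 1 ↔ ∀ᵐ ω ∂P s₀, ω ∈ streett A B :=
    (mem_ae_iff_prob_eq_one (measurableSet_streett hA hB)).symm
  simp only [prob_eq_one_iff]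
  exact ⟨fun ⟨_, hr⟩ => ae_mem_streett_of_isDVSSM hP' hA hB hr,
    fun h => ⟨visitLaw P A B ⊤, isDVSSM_visitLaw_top hP' hA hB h⟩⟩
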